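/- Lipschitz continuity of the gradient of G_η: let n, m, L ≥ 1, η > 0 and C_1, …, C_L ∈ ℝ^{n×m}. Let Φ : ℝ^L → ℝ^{n×m} be the linear map α ↦ ∑_{ℓ=1}^L α_ℓ C_ℓ, and let ‖Φ‖_op denote its operator norm with the Euclidean norm on ℝ^L and the Frobenius norm on ℝ^{n×m}. Then for all Π, Π' ∈ ℝ^{n×m}, ‖M_Π − M_{Π'}‖_F ≤ (1/η) ‖Φ‖_op² ‖Π − Π'‖_F, where M_Π = ∑_ℓ α_ℓ(Π) C_ℓ with α_ℓ(Π) = exp(⟨Π,C_ℓ⟩/η)/∑_{ℓ'} exp(⟨Π,C_{ℓ'}⟩/η) and ‖·‖_F is the Frobenius norm. -/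

import Mathlib

open scoped BigOperators

/-!
The gradient factors as `M_Π = Φ (softmax (Φ* Π / η))`, so it suffices that `softmax` does not
increase Euclidean distances. Since `log` has slope at least `1` on `(0, 1]`, two softmax vectors
`p` and `q` satisfy `‖p - q‖² ≤ ⟪p - q, log p - log q⟫`. Here `log p - log q` differs from the
difference of the arguments by a constant vector, and constant vectors are orthogonal to `p - q`
because both weights sum to `1`. Cauchy–Schwarz then gives nonexpansiveness.
-/

open scoped RealInnerProductSpace

lemma sq_sub_le_sub_mul_log_sub_log {p q : ℝ} (hp : 0 < p) (hp1 : p ≤ 1) (hq : 0 < q)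
    (hq1 : q ≤ 1) : (p - q) ^ 2 ≤ (p - q) * (Real.log p - Real.log q) := by
  wlog h : q ≤ p generalizing p q
  · linarith [this hq hq1 hp hp1 (le_of_not_ge h)]
  have slope : p - q ≤ Real.log p - Real.log q := calc
    p - q ≤ (p - q) / p := le_div_self (sub_nonneg.2 h) hp hp1
    _ = 1 - (p / q)⁻¹ := by rw [inv_div, sub_div, div_self hp.ne']
    _ ≤ Real.log (p / q) := Real.one_sub_inv_le_log_of_pos (div_pos hp hq)
    _ = Real.log p - Real.log q := Real.log_div hp.ne' hq.ne'
  rw [sq]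
  exact mul_le_mul_of_nonneg_left slope (sub_nonneg.2 h)

section Softmax

variable {ι : Type*} [Fintype ι]

/-- The softmax map, sending a vector to the probability weights proportional to the exponentials
of its entries. It acts on `EuclideanSpace` because its Lipschitz constant is taken for the
Euclidean norm. -/
noncomputable def softmax (x : EuclideanSpace ℝ ι) : EuclideanSpace ℝ ι :=
  WithLp.toLp 2 fun i => Real.exp (x i) / ∑ k, Real.exp (x k)

lemma softmax_apply (x : EuclideanSpace ℝ ι) (i : ι) :
    softmax x i = Real.exp (x i) / ∑ k, Real.exp (x k) := rfl

section Nonempty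

variable [Nonempty ι]

lemma sum_exp_pos (x : ι → ℝ) : 0 < ∑ i, Real.exp (x i) :=
  Finset.sum_pos (fun _ _ => Real.exp_pos _) Finset.univ_nonempty

lemma softmax_pos (x : EuclideanSpace ℝ ι) (i : ι) : 0 < softmax x i :=
  div_pos (Real.exp_pos _) (sum_exp_pos x)

lemma sum_softmax (x : EuclideanSpace ℝ ι) : ∑ i, softmax x i = 1 := by
  simp only [softmax_apply]
  rw [← Finset.sum_div, div_self (sum_exp_pos x).ne']

lemma softmax_le_one (x : EuclideanSpace ℝ ι) (i : ι) : softmax x i ≤ 1 :=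
  (Finset.single_le_sum (fun k _ => (softmax_pos x k).le) (Finset.mem_univ i)).trans_eq
    (sum_softmax x)

lemma log_softmax (x : EuclideanSpace ℝ ι) (i : ι) :
    Real.log (softmax x i) = x i - Real.log (∑ k, Real.exp (x k)) := by
  rw [softmax_apply, Real.log_div (Real.exp_pos _).ne' (sum_exp_pos x).ne', Real.log_exp]

lemma sum_softmax_sub_mul_log_sub_log (x y : EuclideanSpace ℝ ι) :
    ∑ i, (softmax x i - softmax y i) * (Real.log (softmax x i) - Real.log (softmax y i)) =
      ⟪softmax x - softmax y, x - y⟫ := by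
  set s := Real.log (∑ k, Real.exp (x k)) - Real.log (∑ k, Real.exp (y k))
  have sum_diff : ∑ i, (softmax x i - softmax y i) = 0 := by
    rw [Finset.sum_sub_distrib, sum_softmax, sum_softmax, sub_self]
  calc
    _ = ∑ i, ((softmax x i - softmax y i) * (x i - y i) - (softmax x i - softmax y i) * s) := by
      refine Finset.sum_congr rfl fun i _ => ?_
      rw [log_softmax, log_softmax]
      ring
    _ = ∑ i, (softmax x i - softmax y i) * (x i - y i) := by
      rw [Finset.sum_sub_distrib, ← Finset.sum_mul, sum_diff, zero_mul, sub_zero]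
    _ = ⟪softmax x - softmax y, x - y⟫ := by
      simp only [PiLp.inner_apply, PiLp.sub_apply, Real.inner_apply, mul_comm]

end Nonempty

lemma norm_softmax_sub_sq_le_inner (x y : EuclideanSpace ℝ ι) :
    ‖softmax x - softmax y‖ ^ 2 ≤ ⟪softmax x - softmax y, x - y⟫ := by
  cases isEmpty_or_nonempty ι
  · simp [PiLp.inner_apply, EuclideanSpace.real_norm_sq_eq]
  rw [EuclideanSpace.real_norm_sq_eq, ← sum_softmax_sub_mul_log_sub_log]
  exact Finset.sum_le_sum fun i _ => sq_sub_le_sub_mul_log_sub_log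
    (softmax_pos x i) (softmax_le_one x i) (softmax_pos y i) (softmax_le_one y i)

lemma norm_softmax_sub_le (x y : EuclideanSpace ℝ ι) : ‖softmax x - softmax y‖ ≤ ‖x - y‖ := by
  have cocoercive : ‖softmax x - softmax y‖ ^ 2 ≤ ‖softmax x - softmax y‖ * ‖x - y‖ :=
    (norm_softmax_sub_sq_le_inner x y).trans (real_inner_le_norm _ _)
  by_contra! h
  nlinarith [norm_nonneg (x - y)]

end Softmax

lemma norm_le_opNorm_mul_of_inner_eq {𝕜 E F : Type*} [RCLike 𝕜]
    [SeminormedAddCommGroup E] [InnerProductSpace 𝕜 E]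
    [SeminormedAddCommGroup F] [InnerProductSpace 𝕜 F] (A : F →L[𝕜] E) {x : E} {u : F}
    (hu : ∀ v, inner 𝕜 u v = inner 𝕜 x (A v)) : ‖u‖ ≤ ‖A‖ * ‖x‖ := by
  have dual_eq : innerSL 𝕜 u = (innerSL 𝕜 x).comp A := ContinuousLinearMap.ext hu
  calc
    ‖u‖ = ‖(innerSL 𝕜 x).comp A‖ := by rw [← dual_eq, innerSL_apply_norm]
    _ ≤ ‖innerSL 𝕜 x‖ * ‖A‖ := ContinuousLinearMap.opNorm_comp_le _ _
    _ = ‖A‖ * ‖x‖ := by rw [innerSL_apply_norm, mul_comm]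

section SoftmaxMean

variable {ι E : Type*} [Fintype ι] [SeminormedAddCommGroup E] [InnerProductSpace ℝ E]

/-- The vector of scores `⟪x, c ℓ⟫ / η`, the argument of the softmax weights `α(x)`. -/
noncomputable def scores (η : ℝ) (c : ι → E) (x : E) : EuclideanSpace ℝ ι :=
  WithLp.toLp 2 fun ℓ => ⟪x, c ℓ⟫ / η

/-- The average of the points `c ℓ` with softmax weights, which is the gradient at `x` of
`η * log (∑ ℓ, exp (⟪x, c ℓ⟫ / η))`. -/
noncomputable def softmaxMean (η : ℝ) (c : ι → E) (x : E) : E :=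
  ∑ ℓ, softmax (scores η c x) ℓ • c ℓ

lemma norm_scores_sub_le {η : ℝ} (hη : 0 < η) (c : ι → E) (Φ : EuclideanSpace ℝ ι →L[ℝ] E)
    (hΦ : ∀ α, Φ α = ∑ ℓ, α ℓ • c ℓ) (x y : E) :
    ‖scores η c x - scores η c y‖ ≤ ‖Φ‖ * ‖x - y‖ / η := by
  have adjoint : ∀ α, ⟪scores η c x - scores η c y, α⟫ = ⟪η⁻¹ • (x - y), Φ α⟫ := fun α => by
    simp only [scores, hΦ, PiLp.inner_apply, Real.inner_apply, inner_sum, real_inner_smul_left,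
      real_inner_smul_right, inner_sub_left]
    rw [← Finset.sum_sub_distrib]
    exact Finset.sum_congr rfl fun ℓ _ => by ring
  calc
    _ ≤ ‖Φ‖ * ‖η⁻¹ • (x - y)‖ := norm_le_opNorm_mul_of_inner_eq Φ adjoint
    _ = ‖Φ‖ * ‖x - y‖ / η := by
      rw [norm_smul, Real.norm_of_nonneg (inv_nonneg.2 hη.le)]
      ring

theorem frot_gradient_lipschitz_general {η : ℝ} (hη : 0 < η) (c : ι → E)
    (Φ : EuclideanSpace ℝ ι →L[ℝ] E) (hΦ : ∀ α, Φ α = ∑ ℓ, α ℓ • c ℓ) (x y : E) :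
    ‖softmaxMean η c x - softmaxMean η c y‖ ≤ (1 / η) * ‖Φ‖ ^ 2 * ‖x - y‖ := calc
  _ = ‖Φ (softmax (scores η c x) - softmax (scores η c y))‖ := by
    rw [map_sub, hΦ, hΦ, softmaxMean, softmaxMean]
  _ ≤ ‖Φ‖ * ‖softmax (scores η c x) - softmax (scores η c y)‖ := Φ.le_opNorm _
  _ ≤ ‖Φ‖ * (‖Φ‖ * ‖x - y‖ / η) := by
    gcongr
    exact (norm_softmax_sub_le _ _).trans (norm_scores_sub_le hη c Φ hΦ x y)
  _ = (1 / η) * ‖Φ‖ ^ 2 * ‖x - y‖ := by ring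

end SoftmaxMean

section Frobenius

variable {κ κ' : Type*}

/-- The vectorization of a matrix, whose Euclidean norm is the Frobenius norm. -/
def vec (A : κ → κ' → ℝ) : EuclideanSpace ℝ (κ × κ') := WithLp.toLp 2 fun q => A q.1 q.2

lemma vec_apply (A : κ → κ' → ℝ) (q : κ × κ') : vec A q = A q.1 q.2 := rfl

variable [Fintype κ] [Fintype κ']

lemma inner_vec (A B : κ → κ' → ℝ) : ⟪vec A, vec B⟫ = ∑ i, ∑ j, A i j * B i j := by
  simp only [PiLp.inner_apply, Real.inner_apply, vec_apply, Fintype.sum_prod_type]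

lemma norm_vec_sub (A B : κ → κ' → ℝ) :
    ‖vec A - vec B‖ = √(∑ i, ∑ j, (A i j - B i j) ^ 2) := by
  simp only [EuclideanSpace.norm_eq, PiLp.sub_apply, vec_apply, Real.norm_eq_abs, sq_abs,
    Fintype.sum_prod_type]

lemma softmaxMean_vec_apply {ι : Type*} [Fintype ι] (η : ℝ) (C : ι → κ → κ' → ℝ)
    (P : κ → κ' → ℝ) (q : κ × κ') :
    softmaxMean η (fun ℓ => vec (C ℓ)) (vec P) q =
      ∑ ℓ, (Real.exp ((∑ i, ∑ j, P i j * C ℓ i j) / η) /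
        ∑ ℓ', Real.exp ((∑ i, ∑ j, P i j * C ℓ' i j) / η)) * C ℓ q.1 q.2 := by
  simp only [softmaxMean, scores, softmax_apply, inner_vec, WithLp.ofLp_sum, Finset.sum_apply,
    PiLp.smul_apply, vec_apply, smul_eq_mul]

end Frobenius

/-- Lipschitz continuity of the gradient of `G_η` — for the gradient
map `M_Π = ∑_ℓ α_ℓ(Π) C_ℓ` with softmax weights `α(Π)`, and `Φ : α ↦ ∑_ℓ α_ℓ C_ℓ`
(Euclidean norm on `ℝ^L`, Frobenius norm on matrices), one has
`‖M_Π − M_{Π'}‖_F ≤ (1/η) ‖Φ‖_op² ‖Π − Π'‖_F`. -/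
theorem frot_gradient_lipschitz (n m L : ℕ) (hL : 1 ≤ L) (η : ℝ) (hη : 0 < η)
    (C : Fin L → Fin n → Fin m → ℝ)
    (Φ : EuclideanSpace ℝ (Fin L) →L[ℝ] EuclideanSpace ℝ (Fin n × Fin m))
    (hΦ : ∀ (α : EuclideanSpace ℝ (Fin L)) (q : Fin n × Fin m),
      Φ α q = ∑ ℓ, α ℓ * C ℓ q.1 q.2)
    (M : (Fin n → Fin m → ℝ) → Fin n → Fin m → ℝ)
    (hM : ∀ (P : Fin n → Fin m → ℝ) (i : Fin n) (j : Fin m),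
      M P i j = ∑ ℓ, (Real.exp ((∑ i', ∑ j', P i' j' * C ℓ i' j') / η) /
        ∑ ℓ' : Fin L, Real.exp ((∑ i', ∑ j', P i' j' * C ℓ' i' j') / η)) * C ℓ i j)
    (P P' : Fin n → Fin m → ℝ) :
    Real.sqrt (∑ i, ∑ j, (M P i j - M P' i j) ^ 2) ≤
      (1 / η) * ‖Φ‖ ^ 2 * Real.sqrt (∑ i, ∑ j, (P i j - P' i j) ^ 2) := by
  have hΦ_vec : ∀ α, Φ α = ∑ ℓ, α ℓ • vec (C ℓ) := fun α => by
    ext q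
    simp [hΦ, vec_apply]
  have hM_vec : ∀ Q, vec (M Q) = softmaxMean η (fun ℓ => vec (C ℓ)) (vec Q) := fun Q => by
    ext q
    rw [vec_apply, hM, softmaxMean_vec_apply]
  rw [← norm_vec_sub, ← norm_vec_sub, hM_vec, hM_vec]
  exact frot_gradient_lipschitz_general hη _ Φ hΦ_vec _ _
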